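/- For every odd natural number q ≥ 3, there is no finite abelian group containing a partial difference set with parameters (q³, q² + q − 2, q − 2, q + 2). -/

import Mathlib

/-!
The argument is a parity count: both `q - 2` and `q + 2` are odd, so every `g ≠ 1` is a quotient
`x * y⁻¹` of elements of `S` in an odd number of ways. As `S = S⁻¹` and `G` is commutative,
`(x, y) ↦ (y⁻¹, x⁻¹)` is an involution on these representations, so it has a fixed point, which
forces `g = x ^ 2` with `x ∈ S`. Since `|G| = q ^ 3` is odd, squaring is injective on `G`; taking
`g = h ^ 2` shows that every `h ≠ 1` lies in `S`. Hence `|S| = q ^ 3 - 1`, which is larger than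
`q ^ 2 + q - 2`.
-/


attribute [local instance] Classical.propDecidable

/-- `S` is a `(v,k,l,m)` partial difference set in the group `G`:
`G` has order `v`, `|S| = k`, `1 ∉ S`, `S = S⁻¹`, and every nonidentity `g ∈ G` has exactly
`l` (resp. `m`) representations `g = x * y⁻¹` with `x, y ∈ S` when `g ∈ S` (resp. `g ∉ S`). -/
def IsPDS {G : Type*} [Group G] (v k l m : ℕ) (S : Set G) : Prop :=
  Nat.card G = v ∧ Nat.card S = k ∧ (1 : G) ∉ S ∧ (∀ s ∈ S, s⁻¹ ∈ S) ∧
  ∀ g : G, g ≠ 1 →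
    Nat.card {p : ↥S × ↥S // (p.1 : G) * (p.2 : G)⁻¹ = g} = if g ∈ S then l else m

/-- If a symmetric subset `S` of a commutative group represents `g` as `x * y⁻¹` in an odd number
of ways, then `g` is the square of an element of `S`. -/
theorem exists_sq_eq_of_odd_card {G : Type*} [CommGroup G] [Finite G] {S : Set G}
    (hinv : ∀ s ∈ S, s⁻¹ ∈ S) {g : G}
    (hodd : Odd (Nat.card {p : ↥S × ↥S // (p.1 : G) * (p.2 : G)⁻¹ = g})) :
    ∃ x ∈ S, x ^ 2 = g := by
  let f : {p : ↥S × ↥S // (p.1 : G) * (p.2 : G)⁻¹ = g} →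
      {p : ↥S × ↥S // (p.1 : G) * (p.2 : G)⁻¹ = g} := fun p =>
    ⟨(⟨(p.1.2 : G)⁻¹, hinv _ p.1.2.2⟩, ⟨(p.1.1 : G)⁻¹, hinv _ p.1.1.2⟩), by
      rw [inv_inv, mul_comm]; exact p.2⟩
  have hf : Function.Involutive f := fun p => by
    apply Subtype.ext; apply Prod.ext <;> apply Subtype.ext <;> simp [f]
  have : Fintype {p : ↥S × ↥S // (p.1 : G) * (p.2 : G)⁻¹ = g} := Fintype.ofFinite _
  obtain ⟨p, hp⟩ := Equiv.Perm.exists_fixed_point_of_prime (p := 2) (n := 1)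
    (by rw [← Nat.card_eq_fintype_card]; exact hodd.not_two_dvd_nat)
    (σ := hf.toPerm f) (by
      ext1 x
      rw [pow_one, pow_two, Equiv.Perm.mul_apply]
      exact hf x)
  have h2 : (p.1.2 : G)⁻¹ = p.1.1 :=
    congrArg (fun r : {p : ↥S × ↥S // (p.1 : G) * (p.2 : G)⁻¹ = g} => (r.1.1 : G)) hp
  refine ⟨p.1.1, p.1.1.2, ?_⟩
  have h3 := p.2
  rw [h2] at h3
  rw [pow_two, h3]

/-- For every odd `q ≥ 3` there is no abelian `(q³, q²+q−2, q−2, q+2)` partial difference set. -/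
theorem stmt_9 (q : ℕ) (hq : Odd q) (hq3 : 3 ≤ q)
    {G : Type*} [CommGroup G] [Finite G] (S : Set G) :
    ¬ IsPDS (q ^ 3) (q ^ 2 + q - 2) (q - 2) (q + 2) S := by
  rintro ⟨hG, hS, h1, hinv, hrep⟩
  have hcop : (Nat.card G).Coprime 2 := by
    rw [hG]; exact (Nat.coprime_two_right).2 hq.pow
  have hinj : Function.Injective fun x : G => x ^ 2 := (powCoprime hcop).injective
  have hmem : ∀ h : G, h ≠ 1 → h ∈ S := by
    intro h hh
    have hg : h ^ 2 ≠ 1 := fun he => hh (hinj (by simpa using he))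
    obtain ⟨x, hx, hxh⟩ := exists_sq_eq_of_odd_card hinv (g := h ^ 2) (by
      rw [hrep _ hg]
      split_ifs
      · exact Nat.Odd.sub_even (by omega) hq even_two
      · exact hq.add_even even_two)
    exact hinj hxh ▸ hx
  have hcompl : Sᶜ = {1} := by
    ext x
    constructor
    · intro hx
      by_contra hne
      exact hx (hmem x hne)
    · rintro rfl
      exact h1
  have hcard := Set.ncard_add_ncard_compl S
  rw [hcompl, Set.ncard_singleton, hG, ← Nat.card_coe_set_eq, hS] at hcard
  have hlt : q ^ 2 + q < q ^ 3 := by nlinarith [mul_le_mul hq3 hq3 (by omega) (by omega)]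
  omega
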